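/- arXiv:2603.08941 — 2 statements merged into one kernel-verified Lean document; each statement's English description precedes it below -/
import Mathlib

section
/- Let F be a finite field, let C ⊆ F^n be a linear code of dimension k with generator matrix G ∈ F^{n×k}, let k' < k, and let Enc be the k'-randomized encoding map for G. Set C_X = C and let C_Z ⊆ F^n be the orthogonal complement of the span of the last k−k' columns of G, and let d_Z be the minimum Hamming weight of a vector in C_Z \ C_X^⊥. Then for every t < n: d_Z > t if and only if Enc is t-ZK. -/
/-- Concatenation `(m, r) ∈ F^k` of a message `m ∈ F^{k'}` (first `k'` coordinates)
with randomness `r ∈ F^{k-k'}` (last `k - k'` coordinates). -/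
def concat {F : Type*} {k k' : ℕ} (m : Fin k' → F) (r : Fin (k - k') → F) : Fin k → F :=
  fun j => if hj : (j : ℕ) < k' then m ⟨j, hj⟩
           else r ⟨(j : ℕ) - k', by have := j.isLt; omega⟩

/-- The orthogonal complement `W^⊥` of a subspace `W ⊆ F^n` with respect to the
bilinear form `⟨u,v⟩ = ∑ i, u i * v i`. -/
def dualCode {F : Type*} [Field F] {n : ℕ} (W : Submodule F (Fin n → F)) :
    Submodule F (Fin n → F) where
  carrier := {u | ∀ w ∈ W, ∑ i, u i * w i = 0}
  add_mem' := by
    intro a b ha hb w hw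
    simp only [Set.mem_setOf_eq] at *
    simp [Pi.add_apply, add_mul, Finset.sum_add_distrib, ha w hw, hb w hw]
  zero_mem' := by intro w hw; simp
  smul_mem' := by
    intro c a ha w hw
    simp only [Set.mem_setOf_eq] at *
    simp [Pi.smul_apply, smul_eq_mul, mul_assoc, ← Finset.mul_sum, ha w hw]

/-- The span of the last `k - k'` columns of `G` (the columns with index `≥ k'`). -/
def lastColSpan {F : Type*} [Field F] {n k : ℕ} (G : Matrix (Fin n) (Fin k) F) (k' : ℕ) :
    Submodule F (Fin n → F) :=
  Submodule.span F {v | ∃ j : Fin k, k' ≤ (j : ℕ) ∧ v = fun i => G i j}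

/-- The `k'`-randomized encoding map for `G` is decodable from `e` errors: there is a
deterministic decoder `D` recovering `m` from `G·(m,r) + y` whenever `wt(y) ≤ e`. -/
def DecodableFromErrors {F : Type*} [Field F] [DecidableEq F] {n k : ℕ}
    (G : Matrix (Fin n) (Fin k) F) (k' e : ℕ) : Prop :=
  ∃ D : (Fin n → F) → (Fin k' → F),
    ∀ (m : Fin k' → F) (r : Fin (k - k') → F) (y : Fin n → F),
      hammingNorm y ≤ e → D (G.mulVec (concat m r) + y) = m

/-- The `k'`-randomized encoding map for `G` is `t`-zero-knowledge: for every set `I` of `t`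
coordinates and every pair of messages `m, m'`, the restrictions `Enc(m)|_I` and `Enc(m')|_I`
are identically distributed (over uniformly random `r`), i.e. each value `v ∈ F^I` is hit by
the same number of choices of randomness `r`. -/
def IsZK {F : Type*} [Field F] {n k : ℕ} (G : Matrix (Fin n) (Fin k) F) (k' t : ℕ) : Prop :=
  ∀ I : Finset (Fin n), I.card = t →
    ∀ m m' : Fin k' → F, ∀ v : {i // i ∈ I} → F,
      Nat.card {r : Fin (k - k') → F //
          ∀ i : {i // i ∈ I}, G.mulVec (concat m r) i.1 = v i} =
      Nat.card {r : Fin (k - k') → F //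
          ∀ i : {i // i ∈ I}, G.mulVec (concat m' r) i.1 = v i}

lemma concat_split {F : Type*} {k k' : ℕ} (hk : k' < k) (x : Fin k → F) :
    ∃ (m : Fin k' → F) (r : Fin (k - k') → F), concat m r = x ∧
      ∀ i, m i = x ⟨i, i.isLt.trans hk⟩ := by
  refine ⟨fun i => x ⟨i, i.isLt.trans hk⟩, fun i => x ⟨i + k', by omega⟩, ?_, fun _ => rfl⟩
  funext j
  unfold concat
  split_ifs with h
  · rfl
  · refine congrArg x (Fin.ext ?_)
    simp only
    omega

lemma concat_sub {F : Type*} [Field F] {k k' : ℕ} (m m' : Fin k' → F) (r r' : Fin (k - k') → F) :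
    (concat (m - m') (r - r') : Fin k → F) = concat m r - concat m' r' := by
  funext j
  simp only [concat, Pi.sub_apply]
  split_ifs <;> rfl

lemma mem_lastColSpan_iff {F : Type*} [Field F] {n k k' : ℕ} (hk : k' < k)
    (G : Matrix (Fin n) (Fin k) F) (y : Fin n → F) :
    y ∈ lastColSpan G k' ↔ ∃ r : Fin (k - k') → F, G.mulVec (concat 0 r) = y := by
  constructor
  · intro hy
    have key : ∃ x : Fin k → F, (∀ j : Fin k, (j : ℕ) < k' → x j = 0) ∧ G.mulVec x = y := by
      unfold lastColSpan at hy
      induction hy using Submodule.span_induction with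
      | mem v hv =>
        obtain ⟨j, hj, rfl⟩ := hv
        refine ⟨Pi.single j 1, ?_, ?_⟩
        · intro i hi
          rw [Pi.single_eq_of_ne]
          rintro rfl
          omega
        · rw [Matrix.mulVec_single_one]
          rfl
      | zero => exact ⟨0, by simp, by simp⟩
      | add a b _ _ ha hb =>
        obtain ⟨x, hx, rfl⟩ := ha
        obtain ⟨z, hz, rfl⟩ := hb
        exact ⟨x + z, fun j hj => by simp [hx j hj, hz j hj], Matrix.mulVec_add _ _ _⟩
      | smul c a _ ha =>
        obtain ⟨x, hx, rfl⟩ := ha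
        exact ⟨c • x, fun j hj => by simp [hx j hj], Matrix.mulVec_smul _ _ _⟩
    obtain ⟨x, hx, rfl⟩ := key
    obtain ⟨m, r, rfl, hm⟩ := concat_split hk x
    refine ⟨r, ?_⟩
    have : m = 0 := by
      funext i
      rw [hm i, hx _ i.isLt]
      rfl
    rw [this]
  · rintro ⟨r, rfl⟩
    rw [Matrix.mulVec_eq_sum]
    refine Submodule.sum_mem _ fun j _ => ?_
    by_cases hj : (j : ℕ) < k'
    · simp [concat, hj]
    · rw [op_smul_eq_smul]
      exact Submodule.smul_mem _ _ (Submodule.subset_span ⟨j, by omega, rfl⟩)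

/-- If no low weight vector in `C_Z` misses the dual of `C`, then any codeword agrees on `I`
with an element of the span of the last columns. -/
lemma exists_agree {F : Type*} [Field F] [DecidableEq F] {n : ℕ}
    (W : Submodule F (Fin n → F)) (I : Finset (Fin n)) (x : Fin n → F)
    (h : ∀ c ∈ dualCode W, hammingNorm c ≤ I.card → ∑ i, c i * x i = 0) :
    ∃ w ∈ W, ∀ i ∈ I, w i = x i := by
  let Z : Submodule F (Fin n → F) :=
    { carrier := {y | ∀ i ∈ I, y i = 0}
      add_mem' := fun {a b} ha hb i hi => by simp [ha i hi, hb i hi]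
      zero_mem' := fun i _ => rfl
      smul_mem' := fun c a ha i hi => by simp [ha i hi] }
  by_cases hx : x ∈ W ⊔ Z
  · obtain ⟨w, hw, z, hz, rfl⟩ := Submodule.mem_sup.1 hx
    exact ⟨w, hw, fun i hi => by simp [hz i hi]⟩
  · exfalso
    obtain ⟨f, hfx, hf⟩ := Submodule.exists_le_ker_of_notMem hx
    have hrep : ∀ y : Fin n → F, ∑ i, f (Pi.single i 1) * y i = f y := by
      intro y
      conv_rhs => rw [LinearMap.pi_apply_eq_sum_univ f y]
      refine Finset.sum_congr rfl fun i _ => ?_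
      rw [smul_eq_mul, mul_comm]
      congr 2
      funext j
      simp [Pi.single_apply, eq_comm]
    apply hfx
    rw [← hrep]
    refine h (fun i => f (Pi.single i 1)) ?_ ?_
    · intro w hw
      rw [hrep]
      exact hf (Submodule.mem_sup_left hw)
    · refine Finset.card_le_card ?_
      intro i hi
      by_contra hiI
      simp only [Finset.mem_filter, Finset.mem_univ, true_and] at hi
      apply hi
      refine hf (Submodule.mem_sup_right ?_)
      intro j hj
      rw [Pi.single_eq_of_ne]
      rintro rfl
      exact hiI hj

/-- With `C_X = C`, `C_Z` the orthogonal complement of the span of the last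
`k - k'` columns of the generator matrix `G`, and `d_Z` the minimum Hamming weight of a vector
in `C_Z \ C_X^⊥`: for every `t < n`, `d_Z > t` iff the `k'`-randomized encoding map for `G`
is `t`-zero-knowledge. -/
theorem dZ_iff_zk
    {F : Type*} [Field F] [Fintype F] [DecidableEq F] {n k k' : ℕ}
    (C : Submodule F (Fin n → F)) (G : Matrix (Fin n) (Fin k) F)
    (hGfullrank : Function.Injective G.mulVecLin)
    (hGspan : LinearMap.range G.mulVecLin = C)
    (hdim : Module.finrank F C = k)
    (hk' : k' < k)
    (CX CZ : Submodule F (Fin n → F))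
    (hCX : CX = C)
    (hCZ : CZ = dualCode (lastColSpan G k'))
    (dZ : ℕ)
    (hdZ : IsLeast {w | ∃ c, c ∈ CZ ∧ c ∉ dualCode CX ∧ hammingNorm c = w} dZ) :
    ∀ t : ℕ, t < n → (t < dZ ↔ IsZK G k' t) := by
  subst hCX hCZ
  intro t ht
  constructor
  · intro htd I hI m m' v
    obtain ⟨w, hw, hwx⟩ := exists_agree (lastColSpan G k') I (G.mulVec (concat (m - m') 0)) (by
      intro c hc hcw
      by_contra hne
      have := hdZ.2 ⟨c, hc, fun hd => hne (hd _ ?_), rfl⟩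
      · omega
      · rw [← hGspan]
        exact ⟨_, rfl⟩)
    obtain ⟨r0, rfl⟩ := (mem_lastColSpan_iff hk' G w).1 hw
    have key : ∀ r : Fin (k - k') → F, ∀ i ∈ I,
        G.mulVec (concat m r) i = G.mulVec (concat m' (r + r0)) i := by
      intro r i hi
      have e := hwx i hi
      have h1 : (concat m r : Fin k → F) - concat m' (r + r0)
          = concat (m - m') 0 - concat 0 r0 := by
        rw [← concat_sub, ← concat_sub]
        simp
      have h2 := congrFun (congrArg G.mulVec h1) i
      rw [Matrix.mulVec_sub, Matrix.mulVec_sub, Pi.sub_apply, Pi.sub_apply, e, sub_self] at h2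
      exact sub_eq_zero.1 h2
    refine Nat.card_congr ((Equiv.addRight r0).subtypeEquiv fun r => ?_)
    refine forall_congr' fun i => ?_
    rw [key r i.1 i.2]
    rfl
  · intro hzk
    by_contra hlt
    obtain ⟨c, hc, hcd, hcw⟩ := hdZ.1
    apply hcd
    intro w hw
    rw [← hGspan] at hw
    obtain ⟨x, rfl⟩ := hw
    obtain ⟨I, hsub, hI⟩ := Finset.exists_superset_card_eq
      (s := Finset.univ.filter fun i => c i ≠ 0) (n := t)
      (by change hammingNorm c ≤ t; omega) (by simpa using ht.le)
    obtain ⟨m, r, rfl, -⟩ := concat_split hk' x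
    have hcard := hzk I hI m 0 (fun i => G.mulVec (concat m r) i.1)
    have hpos : 0 < Nat.card {r' : Fin (k - k') → F //
        ∀ i : {i // i ∈ I}, G.mulVec (concat m r') i.1 = G.mulVec (concat m r) i.1} :=
      Nat.card_pos_iff.2 ⟨⟨⟨r, fun _ => rfl⟩⟩, inferInstance⟩
    rw [hcard] at hpos
    obtain ⟨⟨⟨r', hr'⟩⟩, -⟩ := Nat.card_pos_iff.1 hpos
    rw [← hc _ ((mem_lastColSpan_iff hk' G _).2 ⟨r', rfl⟩)]
    refine Finset.sum_congr rfl fun i _ => ?_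
    by_cases hi : c i = 0
    · simp [hi]
    · have : i ∈ I := hsub (by simp [hi])
      rw [hr' ⟨i, this⟩]
      rfl
end

section
/- Let F be a finite field and let C_X, C_Z ⊆ F^n be linear codes with C_Z^⊥ ⊆ C_X and C_X^⊥ ⊆ C_Z (i.e., (C_X, C_Z) is a CSS code). Let k = dim(C_X) and k' = k − dim(C_Z^⊥). Let G ∈ F^{n×k} be a generator matrix for C_X whose last k−k' columns form a basis for C_Z^⊥, and let Enc be the k'-randomized encoding map for G. Let d_Z be the minimum Hamming weight of a vector in C_Z \ C_X^⊥. Then for every t < n: d_Z > t if and only if Enc is t-ZK. -/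
theorem concat_add' {F : Type*} [Field F] {k k' : ℕ} (m m' : Fin k' → F)
    (r r' : Fin (k - k') → F) : concat (k := k) (m + m') (r + r') = concat m r + concat m' r' := by
  funext j
  simp only [concat, Pi.add_apply]
  split_ifs <;> rfl

theorem concat_smul' {F : Type*} [Field F] {k k' : ℕ} (a : F) (r : Fin (k - k') → F) :
    concat (k := k) (0 : Fin k' → F) (a • r) = a • concat (0 : Fin k' → F) r := by
  funext j
  simp only [concat, Pi.smul_apply]
  split_ifs <;> simp

theorem exists_concat {F : Type*} [Field F] {k k' : ℕ} (h : k' ≤ k) (y : Fin k → F) :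
    ∃ (m : Fin k' → F) (r : Fin (k - k') → F), y = concat m r := by
  refine ⟨fun i => y ⟨i, by omega⟩, fun i => y ⟨k' + i, by omega⟩, ?_⟩
  funext j
  simp only [concat]
  split_ifs with hj
  · rfl
  · congr 1
    ext
    simp only
    omega

theorem mulVec_concat_mem {F : Type*} [Field F] {n k k' : ℕ} (G : Matrix (Fin n) (Fin k) F)
    (r : Fin (k - k') → F) : G.mulVec (concat (0 : Fin k' → F) r) ∈ lastColSpan G k' := by
  have : G.mulVec (concat (0 : Fin k' → F) r)
      = ∑ j, (concat (0 : Fin k' → F) r j) • (fun i => G i j) := by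
    funext i
    simp [Matrix.mulVec, dotProduct, mul_comm]
  rw [this]
  refine Submodule.sum_mem _ fun j _ => ?_
  by_cases hj : (j : ℕ) < k'
  · simp [concat, hj]
  · exact Submodule.smul_mem _ _ (Submodule.subset_span ⟨j, by omega, rfl⟩)

theorem exists_of_mem_lastColSpan {F : Type*} [Field F] {n k k' : ℕ}
    (G : Matrix (Fin n) (Fin k) F) (w : Fin n → F) (hw : w ∈ lastColSpan G k') :
    ∃ r : Fin (k - k') → F, G.mulVec (concat (0 : Fin k' → F) r) = w := by
  unfold lastColSpan at hw
  induction hw using Submodule.span_induction with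
  | mem x hx =>
    obtain ⟨j, hj, rfl⟩ := hx
    refine ⟨Pi.single ⟨j - k', by omega⟩ 1, ?_⟩
    have : concat (0 : Fin k' → F) (Pi.single (⟨j - k', by omega⟩ : Fin (k - k')) (1 : F))
        = Pi.single j 1 := by
      funext l
      simp only [concat, Pi.single_apply, Fin.ext_iff, Pi.zero_apply]
      split_ifs <;> first | rfl | omega
    rw [this]
    funext i
    simp
  | zero =>
    refine ⟨0, ?_⟩
    have := concat_smul' (k := k) (k' := k') (0 : F) 0
    simp only [zero_smul] at this
    rw [this, Matrix.mulVec_zero]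
  | add x y _ _ hx hy =>
    obtain ⟨r, rfl⟩ := hx
    obtain ⟨s, rfl⟩ := hy
    refine ⟨r + s, ?_⟩
    rw [← Matrix.mulVec_add, ← concat_add', add_zero]
  | smul a x _ hx =>
    obtain ⟨r, rfl⟩ := hx
    exact ⟨a • r, by rw [concat_smul', Matrix.mulVec_smul]⟩

theorem exists_sep {F : Type*} [Field F] {n : ℕ} (W : Submodule F (Fin n → F))
    (x : Fin n → F) (hx : x ∉ W) :
    ∃ a ∈ dualCode W, ∑ i, a i * x i ≠ 0 := by
  obtain ⟨f, hf, hW⟩ := Submodule.exists_le_ker_of_notMem hx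
  have key : ∀ y, ∑ i, f (Pi.single i 1) * y i = f y := by
    intro y
    conv_rhs => rw [LinearMap.pi_apply_eq_sum_univ f y]
    refine Finset.sum_congr rfl fun i _ => ?_
    rw [smul_eq_mul, mul_comm]
    congr 2
    funext j
    simp [Pi.single_apply, eq_comm]
  exact ⟨fun i => f (Pi.single i 1), fun w hw => by rw [key]; exact hW hw, by rw [key]; exact hf⟩

theorem dual_dual_le {F : Type*} [Field F] {n : ℕ} (W : Submodule F (Fin n → F)) :
    dualCode (dualCode W) ≤ W := by
  intro x hx
  by_contra h
  obtain ⟨a, ha, hne⟩ := exists_sep W x h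
  apply hne
  rw [← hx a ha]
  exact Finset.sum_congr rfl fun i _ => mul_comm _ _

theorem card_le_of_shift {F : Type*} [Field F] [Fintype F] {n k k' : ℕ}
    (G : Matrix (Fin n) (Fin k) F) (I : Finset (Fin n))
    (H : ∀ m : Fin k' → F, ∃ r0 : Fin (k - k') → F, ∀ i ∈ I, G.mulVec (concat m r0) i = 0)
    (m m' : Fin k' → F) (v : {i // i ∈ I} → F) :
    Nat.card {r : Fin (k - k') → F // ∀ i : {i // i ∈ I}, G.mulVec (concat m r) i.1 = v i} ≤
    Nat.card {r : Fin (k - k') → F // ∀ i : {i // i ∈ I}, G.mulVec (concat m' r) i.1 = v i} := by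
  obtain ⟨r0, h0⟩ := H (m' - m)
  refine Nat.card_le_card_of_injective (fun r => ⟨r.1 + r0, fun i => ?_⟩) ?_
  · have : concat (k := k) m' (r.1 + r0) = concat m r.1 + concat (m' - m) r0 := by
      rw [← concat_add', add_sub_cancel]
    rw [this, Matrix.mulVec_add, Pi.add_apply, h0 _ i.2, add_zero]
    exact r.2 i
  · intro r s h
    exact Subtype.ext (add_right_cancel (Subtype.ext_iff.mp h))

/-- Let `(C_X, C_Z)` be a CSS code (`C_Z^⊥ ⊆ C_X` and `C_X^⊥ ⊆ C_Z`),
let `k = dim C_X`, `k' = k - dim C_Z^⊥`, and let `G` be a generator matrix for `C_X` whose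
last `k - k'` columns form a basis for `C_Z^⊥`. With `d_Z` the minimum Hamming weight of a
vector in `C_Z \ C_X^⊥`: for every `t < n`, `d_Z > t` iff the `k'`-randomized encoding map
for `G` is `t`-zero-knowledge. -/
theorem css_dZ_iff_zk
    {F : Type*} [Field F] [Fintype F] [DecidableEq F] {n : ℕ}
    (CX CZ : Submodule F (Fin n → F))
    (hZX : dualCode CZ ≤ CX) (hXZ : dualCode CX ≤ CZ)
    (k k' : ℕ)
    (hk : k = Module.finrank F CX)
    (hk' : k' = k - Module.finrank F (dualCode CZ))
    (G : Matrix (Fin n) (Fin k) F)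
    (hGfullrank : Function.Injective G.mulVecLin)
    (hGspan : LinearMap.range G.mulVecLin = CX)
    (hlast : lastColSpan G k' = dualCode CZ)
    (dZ : ℕ)
    (hdZ : IsLeast {w | ∃ c, c ∈ CZ ∧ c ∉ dualCode CX ∧ hammingNorm c = w} dZ) :
    ∀ t : ℕ, t < n → (t < dZ ↔ IsZK G k' t) := by
  intro t ht
  have hkk : k' ≤ k := by omega
  constructor
  · intro hlt I hI m m' v
    have H : ∀ m : Fin k' → F, ∃ r0 : Fin (k - k') → F,
        ∀ i ∈ I, G.mulVec (concat m r0) i = 0 := by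
      intro m
      let N : Submodule F (Fin n → F) :=
        { carrier := {u | ∀ i ∈ I, u i = 0}
          add_mem' := fun {a b} ha hb i hi => by simp [ha i hi, hb i hi]
          zero_mem' := fun i _ => rfl
          smul_mem' := fun c a ha i hi => by simp [ha i hi] }
      have hc : G.mulVec (concat m 0) ∈ CX := by
        rw [← hGspan]
        exact ⟨concat m 0, rfl⟩
      have hmem : G.mulVec (concat m 0) ∈ dualCode CZ ⊔ N := by
        by_contra hnot
        obtain ⟨a, ha, hne⟩ := exists_sep _ _ hnot
        have haI : ∀ i, i ∉ I → a i = 0 := by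
          intro i hi
          have h1 : (Pi.single i 1 : Fin n → F) ∈ dualCode CZ ⊔ N := by
            refine Submodule.mem_sup_right ?_
            intro j hj
            have : j ≠ i := fun h => hi (h ▸ hj)
            simp [this]
          simpa [Pi.single_apply] using ha _ h1
        have haZ : a ∈ CZ := dual_dual_le CZ fun w hw => ha w (Submodule.mem_sup_left hw)
        have haX : a ∉ dualCode CX := fun h => hne (h _ hc)
        have h1 := hdZ.2 ⟨a, haZ, haX, rfl⟩
        have h2 : hammingNorm a ≤ I.card := by
          unfold hammingNorm
          refine Finset.card_le_card fun i hi => ?_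
          by_contra h
          exact (Finset.mem_filter.mp hi).2 (haI i h)
        omega
      obtain ⟨w, hw, u, hu, hwu⟩ := Submodule.mem_sup.mp hmem
      rw [← hlast] at hw
      obtain ⟨r, hr⟩ := exists_of_mem_lastColSpan G _ (Submodule.neg_mem _ hw)
      refine ⟨r, fun i hi => ?_⟩
      have : concat (k := k) m r = concat m 0 + concat 0 r := by
        rw [← concat_add', add_zero, zero_add]
      rw [this, Matrix.mulVec_add, hr, ← hwu]
      simpa using hu i hi
    exact le_antisymm (card_le_of_shift G I H m m' v) (card_le_of_shift G I H m' m v)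
  · intro hzk
    by_contra hle
    obtain ⟨c, hcZ, hcX, hcw⟩ := hdZ.1
    have : ∃ x ∈ CX, ∑ i, c i * x i ≠ 0 := by
      by_contra hcon
      push Not at hcon
      exact hcX hcon
    obtain ⟨x, hx, hne⟩ := this
    obtain ⟨I, hsub, -, hI⟩ := Finset.exists_subsuperset_card_eq
      (s := Finset.univ.filter fun i => c i ≠ 0) (t := Finset.univ) (n := t)
      (Finset.subset_univ _) (by unfold hammingNorm at hcw; omega) (by simp; omega)
    rw [← hGspan] at hx
    obtain ⟨y, rfl⟩ := hx
    obtain ⟨m, r, rfl⟩ := exists_concat hkk y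
    have h := hzk I hI m 0 (fun i => G.mulVec (concat m r) i.1)
    have hpos : 0 < Nat.card {s : Fin (k - k') → F //
        ∀ i : {i // i ∈ I}, G.mulVec (concat m s) i.1 = G.mulVec (concat m r) i.1} :=
      @Nat.card_pos _ ⟨⟨r, fun _ => rfl⟩⟩ _
    rw [h] at hpos
    obtain ⟨⟨s, hs⟩⟩ := (Nat.card_pos_iff.mp hpos).1
    have hw := mulVec_concat_mem (k' := k') G s
    rw [hlast] at hw
    apply hne
    rw [← hw c hcZ]
    refine Finset.sum_congr rfl fun i _ => ?_
    by_cases hi : c i = 0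
    · simp [hi]
    · rw [hs ⟨i, hsub (by simp [hi])⟩, mul_comm]
      rfl
end
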